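/- arXiv:1904.03592 — 2 statements merged into one kernel-verified Lean document; each statement's English description precedes it below -/
import Mathlib

section
/- Let S = (S_i)_{i ∈ ℕ₀} be a sequence of symmetric matrices in M_t(ℝ). Then S is a matrix-valued [0,1]-moment sequence if and only if Σ_{i=0}^{k} (-1)^i C(k,i) tr(G S_{i+l}) ≥ 0 for all positive definite matrices G ∈ M_t(ℝ) and all k, l ∈ ℕ₀, where C(k,i) denotes the binomial coefficient. -/
open MeasureTheory

/-- Integral of a real function against a finite signed measure (via Jordan decomposition). -/
noncomputable def sInt {α : Type*} [MeasurableSpace α] (s : SignedMeasure α) (f : α → ℝ) : ℝ :=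
  (∫ x, f x ∂s.toJordanDecomposition.posPart) - ∫ x, f x ∂s.toJordanDecomposition.negPart

/-- A matrix-valued measure (a `t × t` matrix of finite signed Borel measures on `ℝ`)
is positive semidefinite if its value on every Borel set is a positive semidefinite matrix. -/
def IsPSDMatMeas {t : ℕ} (E : Fin t → Fin t → SignedMeasure ℝ) : Prop :=
  ∀ A : Set ℝ, MeasurableSet A → (Matrix.of fun i j => E i j A).PosSemidef

/-- The support of the matrix-valued measure `E` is contained in the closed set `K`:
each entry (as a signed measure) vanishes in total variation outside of `K`. -/
def SuppSubset {t : ℕ} (E : Fin t → Fin t → SignedMeasure ℝ) (K : Set ℝ) : Prop :=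
  ∀ i j, (E i j).totalVariation Kᶜ = 0


/-- `S` is a matrix-valued `K`-moment sequence: there is a positive semidefinite matrix-valued
measure `E` supported in `K` with `Sᵢ = ∫ xⁱ dE(x)` entrywise. -/
def IsMatMomentSeq {t : ℕ} (S : ℕ → Matrix (Fin t) (Fin t) ℝ) (K : Set ℝ) : Prop :=
  ∃ E : Fin t → Fin t → SignedMeasure ℝ, IsPSDMatMeas E ∧ SuppSubset E K ∧
    ∀ (k : ℕ) i j, S k i j = sInt (E i j) fun x => x ^ k

/-!
If `E` is a positive semidefinite matrix of measures on `[0, 1]` and `G` is positive definite, then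
`tr (G E)` is a positive measure with moments `tr (G Sₙ)`, and the alternating sum is its integral
of `x ^ l * (1 - x) ^ k ≥ 0`.

Conversely, the inequalities extend by continuity to `G = v vᵀ`, so by Hausdorff's theorem each
`vᵀ Sₙ v` is the moment sequence of a measure `μ_v` on `[0, 1]`. Polarization turns the `μ_v` into
signed measures with moments `(Sₙ)ᵢⱼ`. Moments determine measures on a compact set, so the quadratic
form of the resulting matrix at `v` is `μ_v`, which is positive.

For Hausdorff's theorem, the linear functional `X ^ n ↦ s n` is nonnegative on Bernstein
polynomials, so it assigns masses to the points `k / n`; a weak limit of these discrete measures has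
moments `s`, because `choose k m / choose n m` is uniformly close to `(k / n) ^ m`.
-/

section Algebra

open Polynomial Finset

variable {R : Type*} [CommRing R]

lemma cast_choose_succ_mul (n m : ℕ) :
    (n.choose (m + 1) : R) * (m + 1) = n.choose m * (n - m) := by
  rcases le_or_gt m n with hmn | hnm
  · rw [← Nat.cast_sub hmn]
    exact_mod_cast congrArg (Nat.cast (R := R)) (Nat.choose_succ_right_eq n m)
  · simp [Nat.choose_eq_zero_of_lt hnm, Nat.choose_eq_zero_of_lt (Nat.lt_succ_of_lt hnm)]

lemma sum_choose_smul_bernsteinPolynomial {m n : ℕ} (hmn : m ≤ n) :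
    ∑ k ∈ range (n + 1), k.choose m • bernsteinPolynomial R n k = n.choose m • (X ^ m : R[X]) := by
  obtain ⟨d, rfl⟩ := Nat.exists_eq_add_of_le hmn
  have low : ∑ k ∈ range m, k.choose m • bernsteinPolynomial R (m + d) k = 0 :=
    sum_eq_zero fun k hk ↦ by rw [Nat.choose_eq_zero_of_lt (mem_range.1 hk), zero_smul]
  rw [add_assoc, sum_range_add, low, zero_add, ← mul_one (X ^ m), ← bernsteinPolynomial.sum R d,
    mul_sum, smul_sum]
  refine sum_congr rfl fun k _ ↦ ?_
  have trinomial : ((m + d).choose (m + k) : R[X]) * (m + k).choose m =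
      (m + d).choose m * d.choose k := by
    have := Nat.choose_mul (n := m + d) (k := m + k) (s := m) (Nat.le_add_right m k)
    rw [Nat.add_sub_cancel_left, Nat.add_sub_cancel_left] at this
    exact_mod_cast congrArg (Nat.cast (R := R[X])) this
  simp only [bernsteinPolynomial, nsmul_eq_mul, Nat.add_sub_add_left]
  linear_combination (X ^ (m + k) * (1 - X) ^ (d - k)) * trinomial

/-- The Riesz functional of a sequence `s`: the linear functional on polynomials `X ^ n ↦ s n`. It
is integration of polynomials when `s` is the moment sequence of a measure. -/
noncomputable def rieszFunctional (s : ℕ → R) : R[X] →ₗ[R] R :=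
  lsum fun n ↦ LinearMap.toSpanSingleton R R (s n)

@[simp]
lemma rieszFunctional_X_pow (s : ℕ → R) (n : ℕ) : rieszFunctional s (X ^ n) = s n := by
  simp [rieszFunctional, ← monomial_one_right_eq_X_pow, sum_monomial_index]

lemma rieszFunctional_X_pow_mul_one_sub_X_pow (s : ℕ → R) (k l : ℕ) :
    rieszFunctional s (X ^ l * (1 - X) ^ k) =
      ∑ i ∈ range (k + 1), (-1) ^ i * (k.choose i : R) * s (i + l) := by
  have expand : (X ^ l * (1 - X) ^ k : R[X]) =
      ∑ i ∈ range (k + 1), ((-1) ^ i * (k.choose i : R)) • X ^ (i + l) := by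
    rw [sub_eq_neg_add, add_pow, mul_sum]
    refine sum_congr rfl fun i _ ↦ ?_
    simp only [smul_eq_C_mul, map_mul, map_pow, map_neg, map_one, map_natCast, neg_pow (X : R[X])]
    ring
  simp only [expand, map_sum, map_smul, rieszFunctional_X_pow, smul_eq_mul]

lemma rieszFunctional_sum_choose_mul_bernsteinPolynomial (s : ℕ → R) {m n : ℕ} (hmn : m ≤ n) :
    ∑ k ∈ range (n + 1), k.choose m * rieszFunctional s (bernsteinPolynomial R n k) =
      n.choose m * s m := by
  have := congrArg (rieszFunctional s) (sum_choose_smul_bernsteinPolynomial hmn)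
  rw [map_sum, map_nsmul, rieszFunctional_X_pow, nsmul_eq_mul] at this
  rw [← this]
  exact sum_congr rfl fun k _ ↦ by rw [map_nsmul, nsmul_eq_mul]

lemma rieszFunctional_sum_bernsteinPolynomial (s : ℕ → R) (n : ℕ) :
    ∑ k ∈ range (n + 1), rieszFunctional s (bernsteinPolynomial R n k) = s 0 := by
  rw [← map_sum, bernsteinPolynomial.sum, ← pow_zero X, rieszFunctional_X_pow]

end Algebra

section BinomialRatio

variable {m n k : ℕ}

lemma choose_succ_div_choose_succ (K : Type*) [Field K] [CharZero K] (m n k : ℕ) :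
    (k.choose (m + 1) : K) / n.choose (m + 1) =
      k.choose m / n.choose m * ((k - m) / (n - m)) := by
  have hm : (m + 1 : K) ≠ 0 := m.cast_add_one_ne_zero
  rw [← mul_div_mul_right _ _ hm, cast_choose_succ_mul, cast_choose_succ_mul, mul_div_mul_comm]

lemma abs_sub_div_sub_sub_div_le (hkn : k ≤ n) (hmn : m < n) :
    |((k : ℝ) - m) / (n - m) - k / n| ≤ m / (n - m) := by
  have hkn' : (k : ℝ) ≤ n := mod_cast hkn
  have hmn' : (0 : ℝ) < n - m := sub_pos.2 (mod_cast hmn)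
  have hn : (0 : ℝ) < n := mod_cast (Nat.zero_le m).trans_lt hmn
  have hx : (0 : ℝ) ≤ 1 - k / n := sub_nonneg.2 ((div_le_one hn).2 hkn')
  have diff : ((k : ℝ) - m) / (n - m) - k / n = -(m * (1 - k / n) / (n - m)) := by
    field_simp
    ring
  rw [diff, abs_neg, abs_of_nonneg (by positivity)]
  gcongr
  exact mul_le_of_le_one_right m.cast_nonneg (sub_le_self 1 (by positivity))

lemma abs_choose_div_choose_sub_div_pow_le (hkn : k ≤ n) (hmn : m < n) :
    |(k.choose m : ℝ) / n.choose m - ((k : ℝ) / n) ^ m| ≤ (m : ℝ) ^ 2 / (n - m) := by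
  induction m with
  | zero => simp
  | succ m ih =>
    have hmn' : (m : ℝ) + 1 < n := mod_cast hmn
    have hx : (k : ℝ) / n ≤ 1 := div_le_one_of_le₀ (mod_cast hkn) n.cast_nonneg
    have hr : (k.choose m : ℝ) / n.choose m ≤ 1 :=
      div_le_one_of_le₀ (mod_cast Nat.choose_le_choose m hkn) (Nat.cast_nonneg _)
    have hfactor := abs_sub_div_sub_sub_div_le hkn (Nat.lt_of_succ_lt hmn)
    rw [choose_succ_div_choose_succ]
    set x : ℝ := k / n
    set r : ℝ := k.choose m / n.choose m
    calc |r * ((k - m) / (n - m)) - x ^ (m + 1)|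
        = |r * ((k - m) / (n - m) - x) + x * (r - x ^ m)| := by ring_nf
      _ ≤ r * |((k : ℝ) - m) / (n - m) - x| + x * |r - x ^ m| := by
        grw [abs_add_le, abs_mul, abs_mul, abs_of_nonneg (by positivity : 0 ≤ r),
          abs_of_nonneg (by positivity : 0 ≤ x)]
      _ ≤ 1 * (m / (n - m)) + 1 * (m ^ 2 / (n - m)) := by
        have := ih (Nat.lt_of_succ_lt hmn)
        gcongr
      _ = (m + m ^ 2) / (n - m) := by ring
      _ ≤ ((m + 1 : ℕ) : ℝ) ^ 2 / (n - (m + 1 : ℕ)) := by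
        push_cast
        apply div_le_div₀ <;> nlinarith

end BinomialRatio

section Moments

open Polynomial Finset

/-- Hausdorff's moment condition on a sequence `s`: the iterated differences `(1 - T) ^ k s`, where
`T` is the shift, are nonnegative. -/
def IsCompletelyMonotone (s : ℕ → ℝ) : Prop :=
  ∀ k l : ℕ, 0 ≤ ∑ i ∈ range (k + 1), (-1 : ℝ) ^ i * (k.choose i : ℝ) * s (i + l)

lemma isCompletelyMonotone_iff_rieszFunctional {s : ℕ → ℝ} :
    IsCompletelyMonotone s ↔ ∀ k l : ℕ, 0 ≤ rieszFunctional s (X ^ l * (1 - X) ^ k) := by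
  simp only [rieszFunctional_X_pow_mul_one_sub_X_pow, IsCompletelyMonotone]

lemma IsCompletelyMonotone.rieszFunctional_bernsteinPolynomial_nonneg {s : ℕ → ℝ}
    (hs : IsCompletelyMonotone s) (n k : ℕ) :
    0 ≤ rieszFunctional s (bernsteinPolynomial ℝ n k) := by
  rw [bernsteinPolynomial, mul_assoc, ← nsmul_eq_mul, map_nsmul]
  exact nsmul_nonneg (isCompletelyMonotone_iff_rieszFunctional.1 hs _ _) _

lemma integral_eval_eq_rieszFunctional {α : Type*} [MeasurableSpace α] {μ : Measure α} {g : α → ℝ}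
    (hg : ∀ n : ℕ, Integrable (fun x ↦ g x ^ n) μ) (p : ℝ[X]) :
    ∫ x, p.eval (g x) ∂μ = rieszFunctional (fun n ↦ ∫ x, g x ^ n ∂μ) p := by
  conv_rhs => rw [p.as_sum_range_C_mul_X_pow]
  simp only [eval_eq_sum_range, ← smul_eq_C_mul, map_sum, map_smul, rieszFunctional_X_pow,
    smul_eq_mul]
  rw [integral_finsetSum _ fun i _ ↦ (hg i).const_mul _]
  simp only [integral_const_mul]

lemma integrable_of_isCompact_of_compl_null {X : Type*} [TopologicalSpace X] [MeasurableSpace X]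
    [OpensMeasurableSpace X] {μ : Measure X} [IsFiniteMeasure μ] {K : Set X} (hK : IsCompact K)
    (hμ : μ Kᶜ = 0) {f : X → ℝ} (hf : Continuous f) : Integrable f μ := by
  obtain ⟨C, hC⟩ := hK.exists_bound_of_continuousOn hf.continuousOn
  have hmem : ∀ᵐ x ∂μ, x ∈ K := ae_iff.2 hμ
  exact .of_bound hf.aestronglyMeasurable C (hmem.mono hC)

lemma isCompletelyMonotone_integral_pow {μ : Measure ℝ} [IsFiniteMeasure μ]
    (hμ : μ (Set.Icc 0 1)ᶜ = 0) : IsCompletelyMonotone fun n ↦ ∫ x, x ^ n ∂μ := by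
  refine isCompletelyMonotone_iff_rieszFunctional.2 fun k l ↦ ?_
  have hpow (n : ℕ) : Integrable (fun x : ℝ ↦ x ^ n) μ :=
    integrable_of_isCompact_of_compl_null isCompact_Icc hμ (by fun_prop)
  have hmem : ∀ᵐ x ∂μ, x ∈ Set.Icc (0 : ℝ) 1 := ae_iff.2 hμ
  rw [← integral_eval_eq_rieszFunctional hpow]
  refine integral_nonneg_of_ae (hmem.mono fun x hx ↦ ?_)
  simpa using mul_nonneg (pow_nonneg hx.1 l) (pow_nonneg (sub_nonneg.2 hx.2) k)

section Determinacy

lemma integrable_of_compactSpace {X : Type*} [TopologicalSpace X] [CompactSpace X]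
    [MeasurableSpace X] [OpensMeasurableSpace X] (μ : Measure X) [IsFiniteMeasure μ] {f : X → ℝ}
    (hf : Continuous f) : Integrable f μ :=
  integrable_of_isCompact_of_compl_null isCompact_univ (by simp) hf

lemma continuous_integral_continuousMap {X : Type*} [TopologicalSpace X] [CompactSpace X]
    [MeasurableSpace X] [BorelSpace X] (μ : Measure X) [IsFiniteMeasure μ] :
    Continuous fun f : C(X, ℝ) ↦ ∫ x, f x ∂μ :=
  (continuous_integral.comp (ContinuousMap.toLp (E := ℝ) 1 μ ℝ).continuous).congr fun f ↦
    integral_congr_ae (ContinuousMap.coeFn_toLp μ f)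

variable {K : Set ℝ} [CompactSpace K]

theorem measure_ext_of_integral_pow {μ ν : Measure K} [IsFiniteMeasure μ]
    [IsFiniteMeasure ν] (h : ∀ n : ℕ, ∫ x, (x : ℝ) ^ n ∂μ = ∫ x, (x : ℝ) ^ n ∂ν) : μ = ν := by
  refine ext_of_forall_integral_eq_of_IsFiniteMeasure fun f ↦ ?_
  have hclosed : IsClosed {f : C(K, ℝ) | ∫ x, f x ∂μ = ∫ x, f x ∂ν} :=
    isClosed_eq (continuous_integral_continuousMap μ) (continuous_integral_continuousMap ν)
  have hpoly : (polynomialFunctions K : Set C(K, ℝ)) ⊆ {f | ∫ x, f x ∂μ = ∫ x, f x ∂ν} := by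
    rw [polynomialFunctions_coe]
    rintro _ ⟨p, rfl⟩
    have hpow (ρ : Measure K) [IsFiniteMeasure ρ] (n : ℕ) :
        Integrable (fun x : K ↦ (x : ℝ) ^ n) ρ :=
      integrable_of_compactSpace ρ (by fun_prop)
    simp [integral_eval_eq_rieszFunctional (hpow _), h]
  have hdense : f.toContinuousMap ∈ (polynomialFunctions K).topologicalClosure := by
    rw [polynomialFunctions.topologicalClosure]
    exact Algebra.mem_top
  exact closure_minimal hpoly hclosed hdense

end Determinacy

section Hausdorff

open Filter Topology unitInterval

variable {s : ℕ → ℝ}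

/-- The discrete approximation to the measure on `I` with moment sequence `s` obtained by applying
the Riesz functional to the Bernstein operator: the point `k / n` has mass
`rieszFunctional s (bernsteinPolynomial ℝ n k)`, truncated at `0`. -/
noncomputable def bernsteinMeasure (s : ℕ → ℝ) (n : ℕ) : Measure I :=
  ∑ k : Fin (n + 1),
    (rieszFunctional s (bernsteinPolynomial ℝ n k)).toNNReal • Measure.dirac (bernstein.z k)

instance (s : ℕ → ℝ) (n : ℕ) : IsFiniteMeasure (bernsteinMeasure s n) := by
  unfold bernsteinMeasure
  infer_instance

lemma integral_bernsteinMeasure (hs : IsCompletelyMonotone s) (n : ℕ) {f : ℝ → ℝ}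
    (hf : Continuous f) : ∫ x : I, f x ∂bernsteinMeasure s n =
      ∑ k ∈ range (n + 1), rieszFunctional s (bernsteinPolynomial ℝ n k) * f (k / n) := by
  rw [bernsteinMeasure, integral_finsetSum_measure fun k _ ↦
    integrable_of_compactSpace _ (by fun_prop), Finset.sum_range]
  refine Finset.sum_congr rfl fun k _ ↦ ?_
  rw [integral_smul_nnreal_measure, integral_dirac, NNReal.smul_def, smul_eq_mul,
    Real.coe_toNNReal _ (hs.rieszFunctional_bernsteinPolynomial_nonneg n k)]
  rfl

lemma bernsteinMeasure_univ (hs : IsCompletelyMonotone s) (n : ℕ) :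
    (bernsteinMeasure s n).real Set.univ = s 0 := by
  have hint := integral_bernsteinMeasure hs n (f := fun _ ↦ 1) continuous_const
  simpa [rieszFunctional_sum_bernsteinPolynomial] using hint

lemma abs_integral_pow_bernsteinMeasure_sub_le (hs : IsCompletelyMonotone s) {m n : ℕ}
    (hmn : m < n) :
    |∫ x : I, (x : ℝ) ^ m ∂bernsteinMeasure s n - s m| ≤ s 0 * ((m : ℝ) ^ 2 / (n - m)) := by
  let w (k : ℕ) : ℝ := rieszFunctional s (bernsteinPolynomial ℝ n k)
  have hw₀ (k : ℕ) : 0 ≤ w k := hs.rieszFunctional_bernsteinPolynomial_nonneg n k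
  have hmass : ∑ k ∈ range (n + 1), w k = s 0 := rieszFunctional_sum_bernsteinPolynomial s n
  have hmoment : ∑ k ∈ range (n + 1), w k * (k.choose m / n.choose m) = s m := by
    have hn : (n.choose m : ℝ) ≠ 0 := mod_cast (Nat.choose_pos hmn.le).ne'
    refine mul_left_cancel₀ hn ?_
    rw [← rieszFunctional_sum_choose_mul_bernsteinPolynomial s hmn.le, mul_sum]
    exact Finset.sum_congr rfl fun k _ ↦ by simp only [w]; field_simp
  rw [integral_bernsteinMeasure hs n (f := fun x ↦ x ^ m) (by fun_prop), abs_sub_comm, ← hmoment,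
    ← hmass, ← sum_sub_distrib, sum_mul]
  refine (abs_sum_le_sum_abs _ _).trans (sum_le_sum fun k hk ↦ ?_)
  rw [← mul_sub, abs_mul, abs_of_nonneg (hw₀ k)]
  exact mul_le_mul_of_nonneg_left
    (abs_choose_div_choose_sub_div_pow_le (Nat.lt_succ_iff.1 (mem_range.1 hk)) hmn) (hw₀ k)

lemma tendsto_integral_pow_bernsteinMeasure (hs : IsCompletelyMonotone s) (m : ℕ) :
    Tendsto (fun n ↦ ∫ x : I, (x : ℝ) ^ m ∂bernsteinMeasure s n) atTop (𝓝 (s m)) := by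
  have hbound : Tendsto (fun n : ℕ ↦ s 0 * ((m : ℝ) ^ 2 / (n - m))) atTop (𝓝 0) := by
    rw [← mul_zero (s 0)]
    exact .const_mul _ (.const_div_atTop
      (tendsto_atTop_add_const_right _ _ tendsto_natCast_atTop_atTop) _)
  rw [tendsto_iff_norm_sub_tendsto_zero]
  exact squeeze_zero' (.of_forall fun _ ↦ norm_nonneg _)
    ((eventually_gt_atTop m).mono fun _ hn ↦ abs_integral_pow_bernsteinMeasure_sub_le hs hn) hbound

theorem IsCompletelyMonotone.exists_measure (hs : IsCompletelyMonotone s) :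
    ∃ μ : Measure I, IsFiniteMeasure μ ∧ ∀ m : ℕ, ∫ x, (x : ℝ) ^ m ∂μ = s m := by
  let μ (n : ℕ) : FiniteMeasure I := ⟨bernsteinMeasure s n, inferInstance⟩
  have hmass (n : ℕ) : (μ n).mass ≤ (s 0).toNNReal := by
    rw [← bernsteinMeasure_univ hs n]
    exact NNReal.le_toNNReal_of_coe_le le_rfl
  let U : Ultrafilter ℕ := .of atTop
  obtain ⟨ν, -, hν⟩ := (isCompact_setOfPred_finiteMeasure_le_of_compactSpace I
    (s 0).toNNReal).ultrafilter_le_nhds' (U.map μ) (mem_map.2 (univ_mem' hmass))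
  refine ⟨ν, inferInstance, fun m ↦ ?_⟩
  have hlim : Tendsto (fun n ↦ ∫ x : I, (x : ℝ) ^ m ∂bernsteinMeasure s n) U
      (𝓝 (∫ x : I, (x : ℝ) ^ m ∂ν)) :=
    FiniteMeasure.tendsto_iff_forall_integral_tendsto.1 (show Tendsto μ U (𝓝 ν) from hν)
      (.mkOfCompact ⟨fun x : I ↦ (x : ℝ) ^ m, by fun_prop⟩)
  exact tendsto_nhds_unique hlim
    ((tendsto_integral_pow_bernsteinMeasure hs m).mono_left (Ultrafilter.of_le _))

end Hausdorff

end Moments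

section SignedMeasure

variable {α : Type*} [MeasurableSpace α]

lemma sInt_eq_integral {s : SignedMeasure α} {f : α → ℝ} (hf : s.Integrable f) :
    sInt s f = ∫ᵛ x, f x ∂<•s := by
  have hvar : Integrable f s.totalVariation := by
    rwa [SignedMeasure.totalVariation_eq_variation]
  nth_rw 2 [← s.toSignedMeasure_toJordanDecomposition]
  rw [JordanDecomposition.toSignedMeasure, VectorMeasure.integral_sub_vectorMeasure,
    VectorMeasure.integral_toSignedMeasure, VectorMeasure.integral_toSignedMeasure, sInt]
  · simpa [VectorMeasure.Integrable] using hvar.left_of_add_measure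
  · simpa [VectorMeasure.Integrable] using hvar.right_of_add_measure

lemma exists_measure_toSignedMeasure_eq {s : SignedMeasure α}
    (hs : ∀ A, MeasurableSet A → 0 ≤ s A) :
    ∃ (μ : Measure α) (_ : IsFiniteMeasure μ), μ.toSignedMeasure = s := by
  have hle : VectorMeasure.restrict 0 Set.univ ≤ s.restrict Set.univ := by
    rw [VectorMeasure.le_restrict_univ_iff_le, VectorMeasure.le_iff]
    exact hs
  exact ⟨s.toMeasureOfZeroLE Set.univ .univ hle, inferInstance,
    s.toMeasureOfZeroLE_toSignedMeasure hle⟩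

lemma signedMeasure_integrable_of_isCompact_of_compl_null {X : Type*} [TopologicalSpace X]
    [MeasurableSpace X] [OpensMeasurableSpace X] {s : SignedMeasure X} {K : Set X}
    (hK : IsCompact K) (hs : s.totalVariation Kᶜ = 0) {f : X → ℝ} (hf : Continuous f) :
    s.Integrable f := by
  rw [VectorMeasure.Integrable, ← SignedMeasure.totalVariation_eq_variation]
  exact integrable_of_isCompact_of_compl_null hK hs hf

lemma signedMeasure_integrable_of_compactSpace {X : Type*} [TopologicalSpace X] [CompactSpace X]
    [MeasurableSpace X] [OpensMeasurableSpace X] (s : SignedMeasure X) {f : X → ℝ}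
    (hf : Continuous f) : s.Integrable f :=
  signedMeasure_integrable_of_isCompact_of_compl_null isCompact_univ (by simp) hf

theorem signedMeasure_ext_of_integral_pow {K : Set ℝ} [CompactSpace K] {σ τ : SignedMeasure K}
    (h : ∀ n : ℕ, ∫ᵛ x, (x : ℝ) ^ n ∂<•σ = ∫ᵛ x, (x : ℝ) ^ n ∂<•τ) : σ = τ := by
  have hint (ρ : SignedMeasure K) (n : ℕ) : ρ.Integrable fun x ↦ (x : ℝ) ^ n :=
    signedMeasure_integrable_of_compactSpace ρ (by fun_prop)
  have jordan_eq : (σ - τ).toJordanDecomposition.posPart =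
      (σ - τ).toJordanDecomposition.negPart := by
    refine measure_ext_of_integral_pow fun n ↦ sub_eq_zero.1 ?_
    change sInt (σ - τ) (fun x ↦ (x : ℝ) ^ n) = 0
    rw [sInt_eq_integral (hint _ n), VectorMeasure.integral_sub_vectorMeasure (hint σ n) (hint τ n),
      h, sub_self]
  rw [← sub_eq_zero, ← (σ - τ).toSignedMeasure_toJordanDecomposition,
    JordanDecomposition.toSignedMeasure]
  simp only [jordan_eq, sub_self]

end SignedMeasure

section Matrix

open Matrix

variable {n 𝕜 : Type*} [RCLike 𝕜]

open scoped MatrixOrder Matrix.Norms.L2Operator ComplexOrder in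
lemma trace_mul_nonneg [Fintype n] {G M : Matrix n n 𝕜} (hG : G.PosSemidef)
    (hM : M.PosSemidef) : 0 ≤ (G * M).trace := by
  classical
  obtain ⟨B, rfl⟩ := CStarAlgebra.nonneg_iff_eq_star_mul_self.1 hG.nonneg
  rw [star_eq_conjTranspose, Matrix.mul_assoc, trace_mul_comm]
  exact (hM.mul_mul_conjTranspose_same B).trace_nonneg

open scoped ComplexOrder Topology in
lemma posSemidef_mem_closure_posDef {G : Matrix n n 𝕜} (hG : G.PosSemidef) :
    G ∈ closure {H : Matrix n n 𝕜 | H.PosDef} := by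
  classical
  have hlim : Filter.Tendsto (fun ε : ℝ ↦ G + ε • (1 : Matrix n n 𝕜)) (𝓝[>] 0) (𝓝 G) := by
    refine Filter.Tendsto.mono_left ?_ nhdsWithin_le_nhds
    exact Continuous.tendsto' (by fun_prop) _ _ (by simp)
  refine mem_closure_of_tendsto hlim ?_
  filter_upwards [self_mem_nhdsWithin] with ε hε
  exact PosDef.posSemidef_add hG (PosDef.one.smul hε)

lemma trace_vecMulVec_mul [Fintype n] {R : Type*} [CommSemiring R] (v w : n → R)
    (M : Matrix n n R) :
    (vecMulVec v w * M).trace = w ⬝ᵥ M *ᵥ v := by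
  rw [vecMulVec_mul, trace_vecMulVec, dotProduct_mulVec, dotProduct_comm]

lemma dotProduct_mulVec_single_add_sub_single_sub [Fintype n] [DecidableEq n] {R : Type*}
    [CommRing R] {M : Matrix n n R} (hM : M.IsSymm) (i j : n) :
    (Pi.single i 1 + Pi.single j 1) ⬝ᵥ M *ᵥ (Pi.single i 1 + Pi.single j 1) -
      (Pi.single i 1 - Pi.single j 1) ⬝ᵥ M *ᵥ (Pi.single i 1 - Pi.single j 1) = 4 * M i j := by
  simp only [mulVec_add, mulVec_sub, add_dotProduct, sub_dotProduct, dotProduct_add,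
    dotProduct_sub, single_one_dotProduct, mulVec_single_one, col_apply, hM.apply i j]
  ring

end Matrix

section TraceMeasure

open Matrix

variable {n α : Type*} [Fintype n] [MeasurableSpace α]

/-- The signed measure `A ↦ tr (G E(A))` obtained from a matrix `E` of signed measures. -/
noncomputable def traceMeasure (G : Matrix n n ℝ) (E : n → n → SignedMeasure α) : SignedMeasure α :=
  ∑ i, ∑ j, G i j • E j i

lemma traceMeasure_apply (G : Matrix n n ℝ) (E : n → n → SignedMeasure α) (A : Set α) :
    traceMeasure G E A = (G * of fun i j ↦ E i j A).trace := by
  simp [traceMeasure, trace, mul_apply]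

lemma integral_traceMeasure (G : Matrix n n ℝ) {E : n → n → SignedMeasure α} {f : α → ℝ}
    (hf : ∀ i j, (E i j).Integrable f) :
    ∫ᵛ x, f x ∂<•(traceMeasure G E) = (G * of fun i j ↦ ∫ᵛ x, f x ∂<•(E i j)).trace := by
  have hsmul (i j : n) : (G i j • E j i).Integrable f := (hf j i).smul_vectorMeasure _
  rw [traceMeasure, VectorMeasure.integral_finsetSum_vectorMeasure fun i _ ↦
    .finsetSum_vectorMeasure fun j _ ↦ hsmul i j]
  simp only [trace, diag_apply, mul_apply, of_apply]
  refine Finset.sum_congr rfl fun i _ ↦ ?_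
  rw [VectorMeasure.integral_finsetSum_vectorMeasure fun j _ ↦ hsmul i j]
  simp only [VectorMeasure.integral_smul_vectorMeasure, smul_eq_mul]

end TraceMeasure

section QuadraticForms

open Matrix

variable {ι : Type*} [Fintype ι] {S : ℕ → Matrix ι ι ℝ}

lemma isCompletelyMonotone_trace_mul_of_posDef
    (h : ∀ G : Matrix ι ι ℝ, G.PosDef → IsCompletelyMonotone fun n ↦ (G * S n).trace)
    {G : Matrix ι ι ℝ} (hG : G.PosSemidef) : IsCompletelyMonotone fun n ↦ (G * S n).trace := by
  intro k l
  have hclosed : IsClosed {H : Matrix ι ι ℝ | 0 ≤ ∑ i ∈ Finset.range (k + 1),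
      (-1 : ℝ) ^ i * (k.choose i : ℝ) * (H * S (i + l)).trace} :=
    isClosed_le continuous_const (by fun_prop)
  exact closure_minimal (fun H hH ↦ h H hH k l) hclosed (posSemidef_mem_closure_posDef hG)

variable {K : Set ℝ} [CompactSpace K]

lemma exists_signedMeasure_integral_pow (hS : ∀ n, (S n).IsSymm)
    (hquad : ∀ v : ι → ℝ, ∃ μ : Measure K, IsFiniteMeasure μ ∧
      ∀ n : ℕ, ∫ x, (x : ℝ) ^ n ∂μ = v ⬝ᵥ S n *ᵥ v) (i j : ι) :
    ∃ σ : SignedMeasure K, ∀ n, ∫ᵛ x, (x : ℝ) ^ n ∂<•σ = S n i j := by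
  classical
  obtain ⟨μ, _, hμ⟩ := hquad (Pi.single i 1 + Pi.single j 1)
  obtain ⟨ν, _, hν⟩ := hquad (Pi.single i 1 - Pi.single j 1)
  refine ⟨(4⁻¹ : ℝ) • (μ.toSignedMeasure - ν.toSignedMeasure), fun n ↦ ?_⟩
  have hint (ρ : SignedMeasure K) : ρ.Integrable fun x ↦ (x : ℝ) ^ n :=
    signedMeasure_integrable_of_compactSpace ρ (by fun_prop)
  rw [VectorMeasure.integral_smul_vectorMeasure,
    VectorMeasure.integral_sub_vectorMeasure (hint _) (hint _),
    VectorMeasure.integral_toSignedMeasure, VectorMeasure.integral_toSignedMeasure, hμ, hν,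
    dotProduct_mulVec_single_add_sub_single_sub (hS n), smul_eq_mul]
  ring

lemma posSemidef_of_integral_pow (hS : ∀ n, (S n).IsSymm)
    (hquad : ∀ v : ι → ℝ, ∃ μ : Measure K, IsFiniteMeasure μ ∧
      ∀ n : ℕ, ∫ x, (x : ℝ) ^ n ∂μ = v ⬝ᵥ S n *ᵥ v)
    {F : ι → ι → SignedMeasure K} (hF : ∀ i j n, ∫ᵛ x, (x : ℝ) ^ n ∂<•(F i j) = S n i j)
    {A : Set K} (hA : MeasurableSet A) : (of fun i j ↦ F i j A).PosSemidef := by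
  refine .of_dotProduct_mulVec_nonneg ?_ fun v ↦ ?_
  · ext i j
    have : F j i = F i j := signedMeasure_ext_of_integral_pow fun n ↦ by
      rw [hF, hF, (hS n).apply]
    simp [this]
  · obtain ⟨μ, _, hμ⟩ := hquad v
    have hint (n : ℕ) (i j : ι) : (F i j).Integrable fun x ↦ (x : ℝ) ^ n :=
      signedMeasure_integrable_of_compactSpace _ (by fun_prop)
    have htrace : traceMeasure (vecMulVec v v) F = μ.toSignedMeasure :=
      signedMeasure_ext_of_integral_pow fun n ↦ by
        rw [integral_traceMeasure _ (hint n), trace_vecMulVec_mul,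
          VectorMeasure.integral_toSignedMeasure, hμ]
        simp only [hF]
        rfl
    rw [star_trivial, ← trace_vecMulVec_mul, ← traceMeasure_apply, htrace,
      Measure.toSignedMeasure_apply_measurable hA]
    exact measureReal_nonneg

end QuadraticForms

section MatrixMoments

open Matrix

variable {t : ℕ} {S : ℕ → Matrix (Fin t) (Fin t) ℝ} {K : Set ℝ}

theorem IsMatMomentSeq.exists_measure_trace_mul (h : IsMatMomentSeq S K) (hK : IsCompact K)
    {G : Matrix (Fin t) (Fin t) ℝ} (hG : G.PosSemidef) :
    ∃ (μ : Measure ℝ) (_ : IsFiniteMeasure μ), μ Kᶜ = 0 ∧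
      ∀ n, (G * S n).trace = ∫ x, x ^ n ∂μ := by
  obtain ⟨E, hE, hsupp, hmom⟩ := h
  have hint (n : ℕ) (i j : Fin t) : (E i j).Integrable fun x ↦ x ^ n :=
    signedMeasure_integrable_of_isCompact_of_compl_null hK (hsupp i j) (by fun_prop)
  have hnonneg (A : Set ℝ) (hA : MeasurableSet A) : 0 ≤ traceMeasure G E A := by
    rw [traceMeasure_apply]
    exact trace_mul_nonneg hG (hE A hA)
  obtain ⟨μ, hμ, hμE⟩ := exists_measure_toSignedMeasure_eq hnonneg
  refine ⟨μ, hμ, ?_, fun n ↦ ?_⟩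
  · have hnull (i j : Fin t) : E i j Kᶜ = 0 :=
      SignedMeasure.null_of_totalVariation_zero _ (hsupp i j)
    have : μ.real Kᶜ = 0 := by
      rw [← Measure.toSignedMeasure_apply_measurable hK.measurableSet.compl, hμE,
        traceMeasure_apply]
      simp [hnull, trace, mul_apply]
    exact (measureReal_eq_zero_iff).1 this
  · have hS : S n = of fun i j ↦ ∫ᵛ x, x ^ n ∂<•(E i j) := by
      ext i j
      rw [hmom, sInt_eq_integral (hint n i j), of_apply]
    rw [hS, ← integral_traceMeasure G (hint n), ← hμE, VectorMeasure.integral_toSignedMeasure]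

variable [CompactSpace K]

lemma isMatMomentSeq_of_subtype {F : Fin t → Fin t → SignedMeasure K}
    (hpos : ∀ A, MeasurableSet A → (of fun i j ↦ F i j A).PosSemidef)
    (hmom : ∀ n i j, ∫ᵛ x, (x : ℝ) ^ n ∂<•(F i j) = S n i j) : IsMatMomentSeq S K := by
  have hemb : MeasurableEmbedding (Subtype.val : K → ℝ) :=
    .subtype_coe (isCompact_iff_compactSpace.2 ‹_›).measurableSet
  refine ⟨fun i j ↦ (F i j).map Subtype.val, fun A hA ↦ ?_, fun i j ↦ ?_, fun n i j ↦ ?_⟩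
  · simpa only [VectorMeasure.map_apply _ measurable_subtype_coe hA] using
      hpos _ (measurable_subtype_coe hA)
  · rw [SignedMeasure.totalVariation_eq_variation, hemb.variation_map, hemb.map_apply]
    simp
  · have hint : ((F i j).map Subtype.val).Integrable fun x ↦ x ^ n :=
      hemb.integrable_map_vectorMeasure.2
        (signedMeasure_integrable_of_compactSpace _ (by fun_prop))
    rw [sInt_eq_integral hint, hemb.integral_map_vectorMeasure, hmom]

theorem isMatMomentSeq_of_forall_dotProduct_mulVec (hS : ∀ n, (S n).IsSymm)
    (hquad : ∀ v : Fin t → ℝ, ∃ μ : Measure K, IsFiniteMeasure μ ∧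
      ∀ n : ℕ, ∫ x, (x : ℝ) ^ n ∂μ = v ⬝ᵥ S n *ᵥ v) : IsMatMomentSeq S K := by
  choose F hF using exists_signedMeasure_integral_pow hS hquad
  exact isMatMomentSeq_of_subtype (fun A hA ↦ posSemidef_of_integral_pow hS hquad hF hA)
    fun n i j ↦ hF i j n

end MatrixMoments

/-- a sequence `S` of symmetric matrices is a matrix-valued `[0,1]`-moment
sequence iff `Σᵢ (-1)^i C(k,i) tr(G S_{i+l}) ≥ 0` for all positive definite `G`
and all `k, l ∈ ℕ`. -/
theorem matMomentSeq_unit_interval_iff (t : ℕ)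
    (S : ℕ → Matrix (Fin t) (Fin t) ℝ) (hS : ∀ i, (S i).IsSymm) :
    IsMatMomentSeq S (Set.Icc (0 : ℝ) 1) ↔
      ∀ G : Matrix (Fin t) (Fin t) ℝ, G.PosDef → ∀ k l : ℕ,
        0 ≤ ∑ i ∈ Finset.range (k + 1),
          (-1 : ℝ) ^ i * (k.choose i : ℝ) * (G * S (i + l)).trace := by
  change _ ↔ ∀ G : Matrix (Fin t) (Fin t) ℝ, G.PosDef →
    IsCompletelyMonotone fun n ↦ (G * S n).trace
  constructor
  · intro h G hG
    obtain ⟨μ, _, hμ, hmom⟩ := h.exists_measure_trace_mul isCompact_Icc hG.posSemidef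
    simpa only [hmom] using isCompletelyMonotone_integral_pow hμ
  · intro h
    refine isMatMomentSeq_of_forall_dotProduct_mulVec hS fun v ↦ ?_
    have hv : (Matrix.vecMulVec v v).PosSemidef := Matrix.posSemidef_vecMulVec_self_star v
    simpa only [trace_vecMulVec_mul] using
      (isCompletelyMonotone_trace_mul_of_posDef h hv).exists_measure
end

section
/- Let F ∈ S_t(ℝ[X₁,…,Xₙ]) be a symmetric matrix polynomial of degree d > 0 such that F(x) is positive definite for all x ∈ [-1,1]ⁿ. Then there exist a positive integer N and positive definite matrices G_α ∈ M_t(ℝ), for α ∈ ℕ₀^{2n} with |α| = 0, …, N+d, such that F(X) = Σ_{|α|=0}^{N+d} G_α (1+X₁)^{α₁} (1-X₁)^{α₂} ⋯ (1+Xₙ)^{α_{2n-1}} (1-Xₙ)^{α_{2n}}. -/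
/-!
Move the cube to `[0, 1]^σ` by an affine substitution. For a polynomial of degree at most `m` in
each variable, the Bernstein coefficients of degree `m` are linear in the polynomial and, as
`m → ∞`, approach its values at the grid points `a / m` uniformly in `a`. The values of `F` on the
cube form a compact set of positive definite matrices, so for large `m` all Bernstein coefficients
of `F` are positive definite. This writes `F` with positive semidefinite coefficients, most of them
zero. To make every coefficient positive definite, apply this to `F - δ • 1` with small `δ > 0`, and
expand the remaining `δ • 1` by the multinomial theorem, which shows that
`1 = (1 + |σ|)⁻ᴹ * (1 + ∑ k, (X k + (1 - X k))) ^ M` is a combination of all monomials of degree at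
most `M` in the `X k` and `1 - X k` with strictly positive coefficients.
-/

open Filter Topology Finset

section PosDef

open Matrix

variable {ι : Type*}

theorem posDef_iff_forall_mem_sphere [Fintype ι] {A : Matrix ι ι ℝ} :
    A.PosDef ↔ A.IsHermitian ∧ ∀ v ∈ Metric.sphere (0 : ι → ℝ) 1, 0 < v ⬝ᵥ A *ᵥ v := by
  rw [posDef_iff_dotProduct_mulVec]
  refine and_congr_right fun _ ↦ ⟨fun h v hv ↦ h (ne_zero_of_mem_unit_sphere ⟨v, hv⟩),
    fun h v hv ↦ ?_⟩
  have hnorm : 0 < ‖v‖ := norm_pos_iff.2 hv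
  have hunit : ‖v‖⁻¹ • v ∈ Metric.sphere (0 : ι → ℝ) 1 := by simp [norm_smul, hnorm.ne']
  have hscale := h _ hunit
  simp only [mulVec_smul, dotProduct_smul, smul_dotProduct, smul_eq_mul] at hscale
  exact pos_of_mul_pos_right (pos_of_mul_pos_right hscale (by positivity)) (by positivity)

theorem isOpen_setOf_forall_mem_sphere_dotProduct_mulVec_pos [Fintype ι] :
    IsOpen {A : Matrix ι ι ℝ | ∀ v ∈ Metric.sphere (0 : ι → ℝ) 1, 0 < v ⬝ᵥ A *ᵥ v} := by
  refine isOpen_iff_eventually.2 fun A hA ↦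
    (isCompact_sphere 0 1).eventually_forall_of_forall_eventually fun v hv ↦ ?_
  have hcont : Continuous fun p : Matrix ι ι ℝ × (ι → ℝ) ↦ p.2 ⬝ᵥ p.1 *ᵥ p.2 := by fun_prop
  exact hcont.continuousAt.eventually (lt_mem_nhds (hA v hv))

theorem eventually_forall_posDef_add [Finite ι] {K : Set (Matrix ι ι ℝ)} (hK : IsCompact K)
    (hpos : ∀ A ∈ K, A.PosDef) :
    ∀ᶠ E in 𝓝 (0 : Matrix ι ι ℝ), E.IsHermitian → ∀ A ∈ K, (A + E).PosDef := by
  cases nonempty_fintype ι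
  obtain ⟨V, hV, hKV⟩ := compact_open_separated_add_right hK
    isOpen_setOf_forall_mem_sphere_dotProduct_mulVec_pos
    fun A hA ↦ (posDef_iff_forall_mem_sphere.1 (hpos A hA)).2
  filter_upwards [hV] with E hE hherm A hA
  exact posDef_iff_forall_mem_sphere.2
    ⟨(hpos A hA).isHermitian.add hherm, hKV (Set.add_mem_add hA hE)⟩

end PosDef

section Bernstein

open Polynomial in
theorem X_pow_eq_sum_bernsteinPolynomial {K : Type*} [Field K] [CharZero K] {j m : ℕ}
    (hj : j ≤ m) :
    (X : K[X]) ^ j =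
      ∑ a ∈ Iic m, C ((a.choose j : K) / m.choose j) * bernsteinPolynomial K m a := by
  obtain ⟨p, rfl⟩ := Nat.exists_eq_add_of_le hj
  have hchoose : ((j + p).choose j : K) ≠ 0 := mod_cast (Nat.choose_pos hj).ne'
  have hlow : ∑ a ∈ range j, C ((a.choose j : K) / (j + p).choose j) *
      bernsteinPolynomial K (j + p) a = 0 :=
    sum_eq_zero fun a ha ↦ by simp [Nat.choose_eq_zero_of_lt (mem_range.1 ha)]
  have hcoeff (i : ℕ) :
      ((j + i).choose j : K) / (j + p).choose j * (j + p).choose (j + i) = p.choose i := by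
    have := Nat.choose_mul (n := j + p) (Nat.le_add_right j i)
    rw [Nat.add_sub_cancel_left, Nat.add_sub_cancel_left] at this
    rw [div_mul_eq_mul_div, div_eq_iff hchoose]
    exact_mod_cast by linarith
  rw [← Nat.range_succ_eq_Iic, add_assoc, sum_range_add, hlow, zero_add]
  calc (X : K[X]) ^ j
    _ = X ^ j * (X + (1 - X)) ^ p := by simp
    _ = _ := by
      rw [add_pow, mul_sum]
      refine sum_congr rfl fun i _ ↦ ?_
      rw [bernsteinPolynomial, ← C_eq_natCast, ← C_eq_natCast, ← hcoeff i,
        Nat.add_sub_add_left, map_mul]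
      ring

end Bernstein

section Tendsto

variable {β : Type*} {l : Filter β}

theorem tendsto_prod_sub_prod {κ : Type*} (s : Finset κ) {x y : κ → β → ℝ}
    (hx : ∀ i ∈ s, ∀ᶠ b in l, |x i b| ≤ 1) (hy : ∀ i ∈ s, ∀ᶠ b in l, |y i b| ≤ 1)
    (hxy : ∀ i ∈ s, Tendsto (fun b ↦ x i b - y i b) l (𝓝 0)) :
    Tendsto (fun b ↦ ∏ i ∈ s, x i b - ∏ i ∈ s, y i b) l (𝓝 0) := by
  classical
  induction s using Finset.induction_on with
  | empty => simpa using tendsto_const_nhds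
  | insert i s hi ih =>
    simp only [forall_mem_insert] at hx hy hxy
    have hprod : ∀ᶠ b in l, ‖∏ i ∈ s, y i b‖ ≤ 1 := by
      filter_upwards [(eventually_all_finset s).2 hy.2] with b hb
      rw [norm_prod]
      exact prod_le_one (fun _ _ ↦ norm_nonneg _) hb
    have hlim := ((ih hx.2 hy.2 hxy.2).zero_mul_isBoundedUnder_le
      (isBoundedUnder_of_eventually_le hx.1)).add
      (hxy.1.zero_mul_isBoundedUnder_le (isBoundedUnder_of_eventually_le hprod))
    refine (hlim.congr fun b ↦ ?_).trans_eq (by simp)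
    rw [prod_insert hi, prod_insert hi]
    ring

theorem abs_natCast_div_le_one {a m : ℕ} (h : a ≤ m) : |(a / m : ℝ)| ≤ 1 := by
  rw [abs_of_nonneg (by positivity)]
  exact div_le_one_of_le₀ (mod_cast h) m.cast_nonneg

theorem abs_tsub_div_tsub_sub_div_le {i a m : ℕ} (hi : i < m) (ha : a ≤ m) :
    |((a - i : ℕ) : ℝ) / (m - i : ℕ) - a / m| ≤ i / (m - i : ℕ) := by
  have hmi : (0 : ℝ) < (m - i : ℕ) := mod_cast Nat.sub_pos_of_lt hi
  have hm : (0 : ℝ) < m := mod_cast i.zero_le.trans_lt hi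
  have hle : ((a - i : ℕ) : ℝ) / (m - i : ℕ) ≤ a / m := by
    rw [div_le_div_iff₀ hmi hm]
    norm_cast
    rw [Nat.sub_mul, Nat.mul_sub, mul_comm i m]
    exact tsub_le_tsub_left (Nat.mul_le_mul_right i ha) _
  rw [abs_sub_comm, abs_of_nonneg (sub_nonneg.2 hle), sub_le_iff_le_add', ← add_div]
  calc (a / m : ℝ)
    _ ≤ a / (m - i : ℕ) := by gcongr; exact m.sub_le i
    _ ≤ (((a - i : ℕ) : ℝ) + i) / (m - i : ℕ) := by
      gcongr
      exact_mod_cast le_tsub_add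

theorem choose_div_choose_eq_prod {j a m : ℕ} :
    (a.choose j / m.choose j : ℝ) = ∏ i ∈ range j, ((a - i : ℕ) : ℝ) / (m - i : ℕ) := by
  rw [prod_div_distrib, ← Nat.cast_prod, ← Nat.cast_prod, ← Nat.descFactorial_eq_prod_range,
    ← Nat.descFactorial_eq_prod_range, Nat.descFactorial_eq_factorial_mul_choose,
    Nat.descFactorial_eq_factorial_mul_choose, Nat.cast_mul, Nat.cast_mul,
    mul_div_mul_left _ _ (mod_cast j.factorial_ne_zero)]

theorem tendsto_choose_div_choose_sub_pow {a m : β → ℕ} (hm : Tendsto m l atTop)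
    (ha : ∀ᶠ b in l, a b ≤ m b) (j : ℕ) :
    Tendsto (fun b ↦ ((a b).choose j / (m b).choose j : ℝ) - (a b / m b : ℝ) ^ j) l (𝓝 0) := by
  have hpow (b : β) : (a b / m b : ℝ) ^ j = ∏ _i ∈ range j, (a b / m b : ℝ) := by
    rw [prod_const, card_range]
  simp only [choose_div_choose_eq_prod, hpow]
  refine tendsto_prod_sub_prod _ (fun i _ ↦ ?_) (fun i _ ↦ ?_) fun i _ ↦ ?_
  · filter_upwards [ha] with b hb using abs_natCast_div_le_one (by omega)
  · filter_upwards [ha] with b hb using abs_natCast_div_le_one hb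
  · have hbound : Tendsto (fun b ↦ (i / (m b - i : ℕ) : ℝ)) l (𝓝 0) :=
      (tendsto_natCast_atTop_atTop.comp ((tendsto_sub_atTop_nat i).comp hm)).const_div_atTop _
    refine squeeze_zero_norm' ?_ hbound
    filter_upwards [ha, hm.eventually_gt_atTop i] with b hab hib
    exact abs_tsub_div_tsub_sub_div_le hib hab

end Tendsto

section MvBernstein

open MvPolynomial

variable {σ K : Type*} [Fintype σ] [Field K]

/-- The coefficient with index `a` in the Bernstein expansion of degree `m` in each variable. It is
defined by linear extension from monomials, so for every polynomial, but the expansion is valid only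
for polynomials of degree at most `m` in each variable. -/
noncomputable def bernsteinCoeff (m : ℕ) (a : σ → ℕ) : MvPolynomial σ K →ₗ[K] K :=
  (basisMonomials σ K).constr K fun γ ↦ ∏ k, ((a k).choose (γ k) / m.choose (γ k) : K)

@[simp]
theorem bernsteinCoeff_monomial (m : ℕ) (a : σ → ℕ) (γ : σ →₀ ℕ) (c : K) :
    bernsteinCoeff m a (monomial γ c) =
      c * ∏ k, ((a k).choose (γ k) / m.choose (γ k) : K) := by
  have hsmul : monomial γ c = c • basisMonomials σ K γ := by simp [smul_monomial]
  rw [hsmul, map_smul, bernsteinCoeff, Module.Basis.constr_basis, smul_eq_mul]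

theorem sum_bernsteinCoeff_smul_prod_bernsteinPolynomial [DecidableEq σ] [CharZero K] {m : ℕ}
    {f : MvPolynomial σ K} (hf : f ∈ restrictDegree σ K m) :
    ∑ a ∈ Iic (fun _ : σ ↦ m),
      bernsteinCoeff m a f • ∏ k, Polynomial.aeval (X k) (bernsteinPolynomial K m (a k)) = f := by
  let expand : MvPolynomial σ K →ₗ[K] MvPolynomial σ K := ∑ a ∈ Iic (fun _ : σ ↦ m),
    (bernsteinCoeff m a).smulRight (∏ k, Polynomial.aeval (X k) (bernsteinPolynomial K m (a k)))
  suffices h : Set.EqOn expand LinearMap.id ((monomial · 1) '' {γ : σ →₀ ℕ | ∀ k, γ k ≤ m}) by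
    rw [restrictDegree, restrictSupport_eq_span] at hf
    simpa [expand] using LinearMap.eqOn_span h hf
  rintro _ ⟨γ, hγ, rfl⟩
  have hpow (k : σ) : (X k : MvPolynomial σ K) ^ γ k = ∑ i ∈ Iic m,
      C ((i.choose (γ k) : K) / m.choose (γ k)) *
        Polynomial.aeval (X k) (bernsteinPolynomial K m i) := by
    have := congrArg (Polynomial.aeval (X k : MvPolynomial σ K))
      (X_pow_eq_sum_bernsteinPolynomial (K := K) (hγ k))
    simpa only [map_pow, map_sum, map_mul, Polynomial.aeval_X, Polynomial.aeval_C,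
      MvPolynomial.algebraMap_eq] using this
  calc expand (monomial γ 1)
    _ = ∑ a ∈ Fintype.piFinset fun _ : σ ↦ Iic m, ∏ k,
          C (((a k).choose (γ k) : K) / m.choose (γ k)) *
            Polynomial.aeval (X k) (bernsteinPolynomial K m (a k)) := by
      simp only [expand, LinearMap.sum_apply, LinearMap.smulRight_apply, bernsteinCoeff_monomial,
        one_mul, smul_eq_C_mul, map_prod, prod_mul_distrib]
      rfl
    _ = ∏ k, X k ^ γ k := by simp only [hpow, prod_univ_sum]
    _ = monomial γ 1 := by simp [monomial_eq, Finsupp.prod_fintype]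

theorem tendsto_bernsteinCoeff_sub_eval {β : Type*} {l : Filter β} {m : β → ℕ} {a : β → σ → ℕ}
    (hm : Tendsto m l atTop) (ha : ∀ᶠ b in l, ∀ k, a b k ≤ m b) (f : MvPolynomial σ ℝ) :
    Tendsto (fun b ↦ bernsteinCoeff (m b) (a b) f - eval (fun k ↦ (a b k / m b : ℝ)) f) l
      (𝓝 0) := by
  induction f using MvPolynomial.induction_on' with
  | add p q hp hq =>
    simpa [add_sub_add_comm] using hp.add hq
  | monomial γ c =>
    have hprod := tendsto_prod_sub_prod univ (l := l)
      (x := fun k b ↦ ((a b k).choose (γ k) / (m b).choose (γ k) : ℝ))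
      (y := fun k b ↦ (a b k / m b : ℝ) ^ γ k)
      (fun k _ ↦ ha.mono fun b hb ↦
        abs_natCast_div_le_one (Nat.choose_le_choose _ (hb k)))
      (fun k _ ↦ ha.mono fun b hb ↦ by
        rw [abs_pow]
        exact pow_le_one₀ (abs_nonneg _) (abs_natCast_div_le_one (hb k)))
      (fun k _ ↦ tendsto_choose_div_choose_sub_pow hm (ha.mono fun b hb ↦ hb k) (γ k))
    simpa [eval_monomial, Finsupp.prod_fintype, mul_sub] using hprod.const_mul c

end MvBernstein

section UnitCube

open MvPolynomial Matrix

variable {σ ι : Type*}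

theorem isSymm_of_forall_mem_Icc_isSymm {F : Matrix ι ι (MvPolynomial σ ℝ)}
    (hF : ∀ x ∈ Set.Icc (0 : σ → ℝ) 1, (F.map (eval x)).IsSymm) : F.IsSymm := by
  refine Matrix.IsSymm.ext fun i j ↦ ?_
  refine funext_set (fun _ ↦ Set.Icc (0 : ℝ) 1) (fun _ ↦ Set.Icc_infinite one_pos) fun x hx ↦ ?_
  exact (hF x ⟨fun k ↦ (hx k trivial).1, fun k ↦ (hx k trivial).2⟩).apply i j

theorem isCompact_image_map_eval (F : Matrix ι ι (MvPolynomial σ ℝ)) :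
    IsCompact ((fun x ↦ F.map (eval x)) '' Set.Icc (0 : σ → ℝ) 1) :=
  isCompact_Icc.image <|
    continuous_matrix fun i j ↦ MvPolynomial.continuous_eval (F i j)

variable [Finite ι]

theorem exists_pos_forall_posDef_sub_smul_one [DecidableEq ι] {F : Matrix ι ι (MvPolynomial σ ℝ)}
    (hF : ∀ x ∈ Set.Icc (0 : σ → ℝ) 1, (F.map (eval x)).PosDef) :
    ∃ δ : ℝ, 0 < δ ∧
      ∀ x ∈ Set.Icc (0 : σ → ℝ) 1, ((F - (δ • (1 : Matrix ι ι ℝ)).map C).map (eval x)).PosDef := by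
  have hlim : Tendsto (fun δ : ℝ ↦ -(δ • (1 : Matrix ι ι ℝ))) (𝓝[>] 0) (𝓝 0) := by
    have hcont : Continuous fun δ : ℝ ↦ -(δ • (1 : Matrix ι ι ℝ)) := by fun_prop
    simpa using (hcont.tendsto 0).mono_left nhdsWithin_le_nhds
  have hnear := eventually_forall_posDef_add (isCompact_image_map_eval F)
    (Set.forall_mem_image.2 hF)
  obtain ⟨δ, hδ, hpos⟩ := (hlim.eventually hnear).and self_mem_nhdsWithin |>.exists
  refine ⟨δ, hpos, fun x hx ↦ ?_⟩
  convert hδ (isHermitian_one.smul (IsSelfAdjoint.all δ)).neg _ ⟨x, hx, rfl⟩ using 1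
  ext i j
  simp [Matrix.one_apply, sub_eq_add_neg]

theorem eventually_forall_posDef_map_bernsteinCoeff [Fintype σ]
    {F : Matrix ι ι (MvPolynomial σ ℝ)}
    (hF : ∀ x ∈ Set.Icc (0 : σ → ℝ) 1, (F.map (eval x)).PosDef) :
    ∀ᶠ m : ℕ in atTop, ∀ a : σ → ℕ, (∀ k, a k ≤ m) → (F.map (bernsteinCoeff m a)).PosDef := by
  -- Convergence along `l` is convergence as `m → ∞`, uniformly in the grid point `a / m`.
  let l : Filter (ℕ × (σ → ℕ)) := comap Prod.fst atTop ⊓ 𝓟 {p | ∀ k, p.2 k ≤ p.1}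
  have hsymm : F.IsSymm := isSymm_of_forall_mem_Icc_isSymm fun x hx ↦ (hF x hx).isHermitian
  have hgrid : ∀ᶠ p in l, ∀ k, p.2 k ≤ p.1 := eventually_inf_principal.2 (.of_forall fun _ h ↦ h)
  have hlim : Tendsto (fun p : ℕ × (σ → ℕ) ↦ F.map (bernsteinCoeff p.1 p.2) -
      F.map (eval fun k ↦ (p.2 k / p.1 : ℝ))) l (𝓝 0) :=
    tendsto_pi_nhds.2 fun i ↦ tendsto_pi_nhds.2 fun j ↦
      tendsto_bernsteinCoeff_sub_eval (tendsto_comap.mono_left inf_le_left) hgrid (F i j)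
  have hnear := eventually_forall_posDef_add (isCompact_image_map_eval F)
    (Set.forall_mem_image.2 hF)
  have hpos : ∀ᶠ p in l, (F.map (bernsteinCoeff p.1 p.2)).PosDef := by
    filter_upwards [hlim.eventually hnear, hgrid] with p hp hle
    have hmem : (fun k ↦ (p.2 k / p.1 : ℝ)) ∈ Set.Icc (0 : σ → ℝ) 1 :=
      ⟨fun k ↦ by positivity, fun k ↦ (le_abs_self _).trans (abs_natCast_div_le_one (hle k))⟩
    rw [← add_sub_cancel (F.map (eval _)) (F.map (bernsteinCoeff _ _))]
    exact hp ((hsymm.map _).sub (hsymm.map _)) _ (Set.mem_image_of_mem _ hmem)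
  filter_upwards [eventually_comap.1 (eventually_inf_principal.1 hpos)] with m hm a ha
  exact hm (m, a) rfl ha

end UnitCube

section Exponents

variable {σ R : Type*} [Fintype σ] [CommSemiring R]

/-- The monomial with exponents `α` in the two families `u` and `v`. A multi-index in `2 * |σ|`
variables is encoded as `α : σ → ℕ × ℕ`, as in the theorem. -/
def pairMonomial (u v : σ → R) (α : σ → ℕ × ℕ) : R :=
  ∏ k, u k ^ (α k).1 * v k ^ (α k).2

theorem pairMonomial_const_mul (c : R) (u v : σ → R) (α : σ → ℕ × ℕ) :
    pairMonomial (fun k ↦ c * u k) (fun k ↦ c * v k) α =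
      c ^ (∑ k, ((α k).1 + (α k).2)) * pairMonomial u v α := by
  rw [pairMonomial, pairMonomial, ← prod_pow_eq_pow_sum, ← prod_mul_distrib]
  exact prod_congr rfl fun k _ ↦ by ring

/-- The exponents `α` padded by one further exponent that raises the total degree to exactly `M`, so
that the multinomial theorem for `M`-th powers applies. The padding is truncated to `0` when `α` has
total degree more than `M`. -/
def slackExponents (M : ℕ) (α : σ → ℕ × ℕ) : Option (σ ⊕ σ) → ℕ :=
  fun e ↦ e.elim (M - ∑ k, ((α k).1 + (α k).2)) (Sum.elim (fun k ↦ (α k).1) fun k ↦ (α k).2)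

theorem sum_slackExponents {M : ℕ} {α : σ → ℕ × ℕ} (hα : ∑ k, ((α k).1 + (α k).2) ≤ M) :
    ∑ e, slackExponents M α e = M := by
  simpa [slackExponents, Fintype.sum_option, ← sum_add_distrib] using Nat.sub_add_cancel hα

variable [DecidableEq σ]

variable (σ) in
/-- The multi-indices of total degree at most `M`; the box `Iic` serves only to make this set a
`Finset`. -/
def pairsOfDegreeLE (M : ℕ) : Finset (σ → ℕ × ℕ) :=
  {α ∈ Iic (fun _ ↦ (M, M)) | ∑ k, ((α k).1 + (α k).2) ≤ M}

@[simp]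
theorem mem_pairsOfDegreeLE {M : ℕ} {α : σ → ℕ × ℕ} :
    α ∈ pairsOfDegreeLE σ M ↔ ∑ k, ((α k).1 + (α k).2) ≤ M := by
  rw [pairsOfDegreeLE, mem_filter, mem_Iic, and_iff_right_iff_imp]
  refine fun h k ↦ Prod.mk_le_mk.1 ?_
  have := (single_le_sum_of_canonicallyOrdered (f := fun k ↦ (α k).1 + (α k).2)
    (mem_univ k)).trans h
  exact ⟨by lia, by lia⟩

theorem one_add_sum_pow_eq_sum_pairMonomial (u v : σ → R) (M : ℕ) :
    (1 + ∑ k, (u k + v k)) ^ M = ∑ α ∈ pairsOfDegreeLE σ M,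
      (Nat.multinomial univ (slackExponents M α) : R) * pairMonomial u v α := by
  let generators : Option (σ ⊕ σ) → R := fun e ↦ e.elim 1 (Sum.elim u v)
  have hsum : 1 + ∑ k, (u k + v k) = ∑ e, generators e := by
    simp [generators, Fintype.sum_option, sum_add_distrib]
  have htotal {β : Option (σ ⊕ σ) → ℕ} (hβ : β ∈ piAntidiag univ M) :
      β none + ∑ k, (β (some (.inl k)) + β (some (.inr k))) = M := by
    rw [sum_add_distrib]
    simpa only [Fintype.sum_option, Fintype.sum_sum_type] using (mem_piAntidiag.1 hβ).1
  rw [hsum, sum_pow_eq_sum_piAntidiag]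
  refine (sum_bij' (fun α _ ↦ slackExponents M α)
    (fun β _ k ↦ (β (some (.inl k)), β (some (.inr k)))) ?_ ?_ ?_ ?_ ?_).symm
  · intro α hα
    simpa using sum_slackExponents (mem_pairsOfDegreeLE.1 hα)
  · intro β hβ
    exact mem_pairsOfDegreeLE.2 (Nat.le_of_add_left_le (htotal hβ).le)
  · intro α _
    rfl
  · intro β hβ
    funext e
    match e with
    | none => exact Nat.sub_eq_of_eq_add (htotal hβ).symm
    | some (.inl k) => rfl
    | some (.inr k) => rfl
  · intro α _
    simp [pairMonomial, generators, slackExponents, Fintype.prod_option, prod_mul_distrib]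

theorem exists_pos_sum_mul_pairMonomial_eq_one {K : Type*} [Field K] [LinearOrder K]
    [IsStrictOrderedRing K] [Algebra K R] {u v : σ → R} (huv : ∀ k, u k + v k = 1) (M : ℕ) :
    ∃ c : (σ → ℕ × ℕ) → K, (∀ α, 0 < c α) ∧
      ∑ α ∈ pairsOfDegreeLE σ M, algebraMap K R (c α) * pairMonomial u v α = 1 := by
  -- `1 + ∑ k, (u k + v k) = 1 + |σ|` is constant, and all coefficients of its powers are positive.
  let T : K := (1 + Fintype.card σ) ^ M
  have hT : 0 < T := by positivity
  refine ⟨fun α ↦ T⁻¹ * Nat.multinomial univ (slackExponents M α), fun α ↦ ?_, ?_⟩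
  · have := Nat.multinomial_pos univ (slackExponents M α)
    positivity
  · calc ∑ α ∈ pairsOfDegreeLE σ M,
          algebraMap K R (T⁻¹ * Nat.multinomial univ (slackExponents M α)) * pairMonomial u v α
      _ = algebraMap K R T⁻¹ * (1 + ∑ k, (u k + v k)) ^ M := by
        rw [one_add_sum_pow_eq_sum_pairMonomial, mul_sum]
        refine sum_congr rfl fun α _ ↦ ?_
        rw [map_mul, map_natCast, mul_assoc]
      _ = algebraMap K R (T⁻¹ * T) := by simp [T, huv]
      _ = 1 := by rw [inv_mul_cancel₀ hT.ne', map_one]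

/-- The monomial with exponents `α` in the polynomials `X k` and `1 - X k`, which are nonnegative on
the unit cube. -/
noncomputable def unitCubeMonomial (A : Type*) [CommRing A] (α : σ → ℕ × ℕ) :
    MvPolynomial σ A :=
  pairMonomial MvPolynomial.X (fun k ↦ 1 - MvPolynomial.X k) α

end Exponents

section Cone

open MvPolynomial

variable {σ ι κ : Type*}

variable (ι) in
/-- The convex cone of matrix polynomials `∑ a ∈ s, w a • S a` with positive semidefinite constant
coefficient matrices `S a`. -/
def posSemidefCone (s : Finset κ) (w : κ → MvPolynomial σ ℝ) :
    AddSubmonoid (Matrix ι ι (MvPolynomial σ ℝ)) where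
  carrier := {F | ∃ S : κ → Matrix ι ι ℝ, (∀ a, (S a).PosSemidef) ∧
    F = ∑ a ∈ s, w a • (S a).map C}
  zero_mem' := ⟨0, fun _ ↦ .zero, by simp⟩
  add_mem' := by
    rintro _ _ ⟨S, hS, rfl⟩ ⟨T, hT, rfl⟩
    refine ⟨S + T, fun a ↦ (hS a).add (hT a), ?_⟩
    simp [Matrix.map_add, smul_add, sum_add_distrib]

theorem smul_map_C_mem_posSemidefCone {s : Finset κ} {w : κ → MvPolynomial σ ℝ} {a : κ}
    (ha : a ∈ s) {A : Matrix ι ι ℝ} (hA : A.PosSemidef) :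
    w a • A.map C ∈ posSemidefCone ι s w := by
  classical
  refine ⟨Pi.single a A, fun b ↦ ?_, ?_⟩
  · obtain rfl | hb := eq_or_ne b a
    · simpa using hA
    · simpa [hb] using Matrix.PosSemidef.zero
  · rw [sum_eq_single_of_mem a ha fun b _ hb ↦ by simp [hb], Pi.single_eq_same]

variable [Fintype σ]

theorem prod_aeval_X_bernsteinPolynomial {R : Type*} [CommRing R] (m : ℕ) (a : σ → ℕ) :
    ∏ k, Polynomial.aeval (X k) (bernsteinPolynomial R m (a k)) =
      C (∏ k, (m.choose (a k) : R)) * unitCubeMonomial R fun k ↦ (a k, m - a k) := by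
  simp [unitCubeMonomial, bernsteinPolynomial, pairMonomial, prod_mul_distrib, mul_assoc]

variable [DecidableEq σ]

theorem mem_posSemidefCone_of_posSemidef_map_bernsteinCoeff {m M : ℕ}
    {F : Matrix ι ι (MvPolynomial σ ℝ)} (hdeg : ∀ i j, F i j ∈ restrictDegree σ ℝ m)
    (hF : ∀ a : σ → ℕ, (∀ k, a k ≤ m) → (F.map (bernsteinCoeff m a)).PosSemidef)
    (hM : Fintype.card σ * m ≤ M) :
    F ∈ posSemidefCone ι (pairsOfDegreeLE σ M) (unitCubeMonomial ℝ) := by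
  have hsum : F = ∑ a ∈ Iic fun _ : σ ↦ m, unitCubeMonomial ℝ (fun k ↦ (a k, m - a k)) •
      ((∏ k, (m.choose (a k) : ℝ)) • F.map (bernsteinCoeff m a)).map C := by
    ext1 i j
    conv_lhs => rw [← sum_bernsteinCoeff_smul_prod_bernsteinPolynomial (hdeg i j)]
    rw [Matrix.sum_apply]
    refine sum_congr rfl fun a _ ↦ ?_
    rw [prod_aeval_X_bernsteinPolynomial, smul_eq_C_mul]
    simp only [Matrix.smul_apply, Matrix.map_apply, smul_eq_mul, map_mul]
    ring
  rw [hsum]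
  refine sum_mem fun a ha ↦ smul_map_C_mem_posSemidefCone ?_ ?_
  · have hle (k : σ) : a k + (m - a k) = m := Nat.add_sub_cancel' (mem_Iic.1 ha k)
    simpa [hle] using hM
  · exact (hF a (mem_Iic.1 ha)).smul (by positivity)

theorem exists_pos_map_C_eq_sum_unitCubeMonomial_smul (M : ℕ) :
    ∃ c : (σ → ℕ × ℕ) → ℝ, (∀ α, 0 < c α) ∧ ∀ A : Matrix ι ι ℝ,
      A.map (C : ℝ →+* MvPolynomial σ ℝ) =
        ∑ α ∈ pairsOfDegreeLE σ M, unitCubeMonomial ℝ α • (c α • A).map C := by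
  obtain ⟨c, hc, hone⟩ := exists_pos_sum_mul_pairMonomial_eq_one (K := ℝ)
    (fun k : σ ↦ add_sub_cancel (X k : MvPolynomial σ ℝ) 1) M
  refine ⟨c, hc, fun A ↦ ?_⟩
  rw [← one_smul (MvPolynomial σ ℝ) (A.map C), ← hone, sum_smul]
  refine sum_congr rfl fun α _ ↦ ?_
  ext1 i j
  simp only [unitCubeMonomial, MvPolynomial.algebraMap_eq, Matrix.smul_apply, Matrix.map_apply,
    smul_eq_mul, map_mul]
  ring

variable [Finite ι]

theorem eventually_mem_posSemidefCone {F : Matrix ι ι (MvPolynomial σ ℝ)}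
    (hF : ∀ x ∈ Set.Icc (0 : σ → ℝ) 1, (F.map (eval x)).PosDef) :
    ∀ᶠ M : ℕ in atTop, F ∈ posSemidefCone ι (pairsOfDegreeLE σ M) (unitCubeMonomial ℝ) := by
  have hdeg : ∀ᶠ m : ℕ in atTop, ∀ i j, F i j ∈ restrictDegree σ ℝ m :=
    eventually_all.2 fun i ↦ eventually_all.2 fun j ↦
      (eventually_ge_atTop (F i j).totalDegree).mono fun m hm ↦
        (mem_restrictDegree _ _ _).2 fun γ hγ k ↦
          (monomial_le_degreeOf k hγ).trans ((degreeOf_le_totalDegree _ k).trans hm)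
  obtain ⟨m, hdeg, hpos⟩ := (hdeg.and (eventually_forall_posDef_map_bernsteinCoeff hF)).exists
  filter_upwards [eventually_ge_atTop (Fintype.card σ * m)] with M hM
  exact mem_posSemidefCone_of_posSemidef_map_bernsteinCoeff hdeg
    (fun a ha ↦ (hpos a ha).posSemidef) hM

theorem eventually_exists_posDef_rep_of_unitCube {F : Matrix ι ι (MvPolynomial σ ℝ)}
    (hF : ∀ x ∈ Set.Icc (0 : σ → ℝ) 1, (F.map (eval x)).PosDef) :
    ∀ᶠ M : ℕ in atTop, ∃ G : (σ → ℕ × ℕ) → Matrix ι ι ℝ, (∀ α, (G α).PosDef) ∧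
      F = ∑ α ∈ pairsOfDegreeLE σ M, unitCubeMonomial ℝ α • (G α).map C := by
  classical
  obtain ⟨δ, hδ, hFδ⟩ := exists_pos_forall_posDef_sub_smul_one hF
  filter_upwards [eventually_mem_posSemidefCone hFδ] with M ⟨S, hS, hFS⟩
  obtain ⟨c, hc, hconst⟩ := exists_pos_map_C_eq_sum_unitCubeMonomial_smul (σ := σ) (ι := ι) M
  refine ⟨fun α ↦ c α • δ • 1 + S α,
    fun α ↦ ((Matrix.PosDef.one.smul hδ).smul (hc α)).add_posSemidef (hS α), ?_⟩
  rw [← add_sub_cancel ((δ • (1 : Matrix ι ι ℝ)).map C) F, hFS, hconst, ← sum_add_distrib]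
  refine sum_congr rfl fun α _ ↦ ?_
  rw [Matrix.map_add C (map_add C), smul_add]

end Cone

section Substitution

open MvPolynomial

variable {σ K : Type*} [Field K] [CharZero K]

theorem C_inv_two_mul_two : (C 2⁻¹ : MvPolynomial σ K) * 2 = 1 := by
  rw [← map_ofNat C 2, ← map_mul, inv_mul_cancel₀ two_ne_zero, map_one]

variable (σ K) in
/-- The affine substitution `X k ↦ 2 * X k - 1`, which moves the cube `[-1, 1]^σ` to the unit
cube; its inverse is `X k ↦ (1 + X k) / 2`. -/
noncomputable def unitCubeSubst : MvPolynomial σ K ≃ₐ[K] MvPolynomial σ K :=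
  .ofAlgHom (aeval fun k ↦ 2 * X k - 1) (aeval fun k ↦ C 2⁻¹ * (1 + X k))
    (algHom_ext fun k ↦ by
      simp only [AlgHom.comp_apply, aeval_X, map_add, map_mul, map_one, algHom_C,
        MvPolynomial.algebraMap_eq, AlgHom.id_apply]
      linear_combination X k * C_inv_two_mul_two (σ := σ) (K := K))
    (algHom_ext fun k ↦ by
      simp only [AlgHom.comp_apply, aeval_X, map_sub, map_mul, map_one, map_ofNat,
        AlgHom.id_apply]
      linear_combination (1 + X k) * C_inv_two_mul_two (σ := σ) (K := K))

theorem eval_unitCubeSubst (x : σ → K) (f : MvPolynomial σ K) :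
    eval x (unitCubeSubst σ K f) = eval (fun k ↦ 2 * x k - 1) f := by
  have hcomp : (aeval x).comp (unitCubeSubst σ K).toAlgHom = aeval fun k ↦ 2 * x k - 1 :=
    algHom_ext fun k ↦ by simp [unitCubeSubst]
  simpa [aeval_eq_eval] using DFunLike.congr_fun hcomp f

theorem unitCubeSubst_symm_C (r : K) : (unitCubeSubst σ K).symm (C r) = C r :=
  (unitCubeSubst σ K).symm.commutes r

theorem unitCubeSubst_symm_X (k : σ) : (unitCubeSubst σ K).symm (X k) = C 2⁻¹ * (1 + X k) := by
  simp [unitCubeSubst]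

theorem unitCubeSubst_symm_one_sub_X (k : σ) :
    (unitCubeSubst σ K).symm (1 - X k) = C 2⁻¹ * (1 - X k) := by
  rw [map_sub, map_one, unitCubeSubst_symm_X]
  linear_combination -C_inv_two_mul_two (σ := σ) (K := K)

theorem unitCubeSubst_symm_unitCubeMonomial [Fintype σ] (α : σ → ℕ × ℕ) :
    (unitCubeSubst σ K).symm (unitCubeMonomial K α) =
      C (2⁻¹ ^ ∑ k, ((α k).1 + (α k).2)) *
        pairMonomial (fun k ↦ 1 + X k) (fun k ↦ 1 - X k) α := by
  rw [C_pow, ← pairMonomial_const_mul]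
  simp only [unitCubeMonomial, pairMonomial, map_prod, map_mul, map_pow, unitCubeSubst_symm_X,
    unitCubeSubst_symm_one_sub_X]

end Substitution

section Hypercube

open MvPolynomial

variable {σ ι : Type*} [Fintype σ] [DecidableEq σ] [Finite ι]

theorem posDef_on_hypercube_rep_general (F : Matrix ι ι (MvPolynomial σ ℝ))
    (hpos : ∀ x : σ → ℝ, (∀ k, x k ∈ Set.Icc (-1 : ℝ) 1) → (F.map (eval x)).PosDef) :
    ∀ᶠ M : ℕ in atTop, ∃ G : (σ → ℕ × ℕ) → Matrix ι ι ℝ, (∀ α, (G α).PosDef) ∧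
      F = ∑ α ∈ pairsOfDegreeLE σ M,
        (∏ k, (1 + X k) ^ (α k).1 * (1 - X k) ^ (α k).2 : MvPolynomial σ ℝ) • (G α).map C := by
  have hunit : ∀ x ∈ Set.Icc (0 : σ → ℝ) 1, ((F.map (unitCubeSubst σ ℝ)).map (eval x)).PosDef := by
    intro x hx
    have hcomp : eval x ∘ unitCubeSubst σ ℝ = eval fun k ↦ 2 * x k - 1 :=
      funext (eval_unitCubeSubst x)
    rw [Matrix.map_map, hcomp]
    refine hpos _ fun k ↦ ?_
    have h₀ : 0 ≤ x k := hx.1 k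
    have h₁ : x k ≤ 1 := hx.2 k
    constructor <;> linarith
  filter_upwards [eventually_exists_posDef_rep_of_unitCube hunit] with M ⟨G, hG, hF⟩
  refine ⟨fun α ↦ (2⁻¹ : ℝ) ^ (∑ k, ((α k).1 + (α k).2)) • G α,
    fun α ↦ (hG α).smul (by positivity), ?_⟩
  ext1 i j
  have hij := congrArg (unitCubeSubst σ ℝ).symm (congrFun₂ hF i j)
  rw [Matrix.map_apply, AlgEquiv.symm_apply_apply, Matrix.sum_apply, map_sum] at hij
  rw [hij, Matrix.sum_apply]
  refine sum_congr rfl fun α _ ↦ ?_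
  simp only [Matrix.smul_apply, Matrix.map_apply, smul_eq_mul, map_mul,
    unitCubeSubst_symm_unitCubeMonomial, unitCubeSubst_symm_C, pairMonomial]
  ring

end Hypercube

/-- representation of matrix polynomials positive definite on the hypercube
`[-1,1]ⁿ`. Multi-indices `α ∈ ℕ₀^{2n}` are encoded as `α : Fin n → ℕ × ℕ`, where
`(α k).1` is the exponent of `1 + X_k` and `(α k).2` is the exponent of `1 - X_k`. -/
theorem posDef_on_hypercube_rep (n t d : ℕ) (hd : 0 < d)
    (F : Matrix (Fin t) (Fin t) (MvPolynomial (Fin n) ℝ)) (hsymm : F.IsSymm)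
    (hdegle : ∀ i j, (F i j).totalDegree ≤ d) (hdeg : ∃ i j, (F i j).totalDegree = d)
    (hpos : ∀ x : Fin n → ℝ, (∀ k, x k ∈ Set.Icc (-1 : ℝ) 1) →
      (F.map (MvPolynomial.eval x)).PosDef) :
    ∃ N : ℕ, 0 < N ∧ ∃ G : (Fin n → ℕ × ℕ) → Matrix (Fin t) (Fin t) ℝ,
      (∀ α : Fin n → ℕ × ℕ, (∑ k, ((α k).1 + (α k).2)) ≤ N + d → (G α).PosDef) ∧
      F = ∑ α ∈ (Finset.Iic (fun _ => (N + d, N + d) : Fin n → ℕ × ℕ)).filter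
            (fun α => (∑ k, ((α k).1 + (α k).2)) ≤ N + d),
          ((∏ k, (1 + MvPolynomial.X k) ^ (α k).1 * (1 - MvPolynomial.X k) ^ (α k).2 : MvPolynomial (Fin n) ℝ)) •
            (G α).map MvPolynomial.C := by
  obtain ⟨N, ⟨G, hG, hF⟩, hN⟩ := (((tendsto_add_atTop_nat d).eventually
    (posDef_on_hypercube_rep_general F hpos)).and (eventually_gt_atTop 0)).exists
  exact ⟨N, hN, G, fun α _ ↦ hG α, hF⟩
end
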